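/- Let x ↦ P_x be an exhaustive coding function such that μ(⋃_{y ∈ P_x} I_y) = 2^(−|x|) for every finite word x. Then there exists a continuous tossing process T : (ℕ → Bool) → (ℕ → Bool) such that T⁻¹(I_x) = ⋃_{y ∈ P_x} I_y for every finite word x. -/

import Mathlib

open MeasureTheory

/-- The cylinder determined by a finite binary word `x`: the set of infinite binary
sequences having `x` as a prefix. -/
def Cyl (x : List Bool) : Set (ℕ → Bool) := {α | ∀ i : Fin x.length, α i.1 = x.get i}

/-- The uniform Bernoulli(1/2) ("fair coin") measure on `Bool`. -/
noncomputable def coin : Measure Bool := (PMF.bernoulli 2⁻¹ (by norm_num)).toMeasure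

/-- `μ` is the fair-coin measure on Cantor space: the product over `ℕ` of uniform
Bernoulli(1/2) measures, characterized by the fact that all finite-dimensional marginals
are finite products of `coin`. -/
def IsFairCoin (μ : Measure (ℕ → Bool)) : Prop :=
  IsProjectiveLimit μ (fun J : Finset ℕ => Measure.pi fun _ : J => coin)

/-- A binary prefix code: a nonempty set of finite binary words, no element of which is a
proper prefix of another. -/
def IsPrefixCode (P : Set (List Bool)) : Prop :=
  P.Nonempty ∧ ∀ x ∈ P, ∀ y ∈ P, x <+: y → x = y

/-- `P ⪯ Q`: every element of `Q` extends (has as a prefix) some element of `P`. -/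
def CodeLE (P Q : Set (List Bool)) : Prop := ∀ y ∈ Q, ∃ x ∈ P, x <+: y

/-- An exhaustive set of words: every infinite binary sequence has a prefix in it. -/
def IsExhaustiveCode (P : Set (List Bool)) : Prop := ∀ α : ℕ → Bool, ∃ x ∈ P, α ∈ Cyl x

/-- A coding function: each `P x` is a prefix code, `P ε = {ε}`, prefix-incomparable
words get disjoint codes, and `x` a prefix of `y` implies `P x ⪯ P y`. -/
def IsCodingFunction (P : List Bool → Set (List Bool)) : Prop :=
  (∀ x, IsPrefixCode (P x)) ∧
  P [] = {[]} ∧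
  (∀ x y : List Bool, ¬ x <+: y → ¬ y <+: x → P x ∩ P y = ∅) ∧
  ∀ x y : List Bool, x <+: y → CodeLE (P x) (P y)

/-- An exhaustive coding function: it maps exhaustive prefix codes to exhaustive
prefix codes. -/
def IsExhaustiveCodingFunction (P : List Bool → Set (List Bool)) : Prop :=
  ∀ Q : Set (List Bool), IsPrefixCode Q → IsExhaustiveCode Q →
    IsPrefixCode (⋃ x ∈ Q, P x) ∧ IsExhaustiveCode (⋃ x ∈ Q, P x)

theorem cyl_get {x : List Bool} {α : ℕ → Bool} (h : α ∈ Cyl x) (i : ℕ) (hi : i < x.length) :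
    α i = x[i] := h ⟨i, hi⟩

theorem cyl_prefix {x y : List Bool} (h : x <+: y) : Cyl y ⊆ Cyl x := by
  intro α hα i
  have := cyl_get hα i.1 (lt_of_lt_of_le i.2 h.length_le)
  rw [this]
  simpa using (h.getElem i.2).symm

theorem cyl_compar {x y : List Bool} {α : ℕ → Bool} (hx : α ∈ Cyl x) (hy : α ∈ Cyl y)
    (hl : x.length ≤ y.length) : x <+: y := by
  rw [List.prefix_iff_eq_take]
  apply List.ext_getElem
  · simp [hl]
  · intro i h1 h2
    rw [List.getElem_take, ← cyl_get hx i h1, ← cyl_get hy]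

theorem cyl_open (x : List Bool) : IsOpen (Cyl x) := by
  have : Cyl x = ⋂ i : Fin x.length, (fun α : ℕ → Bool => α i.1) ⁻¹' {x.get i} := by
    ext α; simp [Cyl]
  rw [this]
  exact isOpen_iInter_of_finite fun i =>
    (isOpen_discrete _).preimage (continuous_apply _)

theorem mem_cyl_ofFn (α : ℕ → Bool) (n : ℕ) :
    α ∈ Cyl (List.ofFn fun i : Fin n => α i) := by
  intro i; simp

theorem coin_singleton (b : Bool) : coin {b} = 2⁻¹ := by
  rw [coin, PMF.toMeasure_apply_singleton _ _ (measurableSet_singleton _)]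
  cases b <;> simp [PMF.bernoulli_apply] 

instance : IsProbabilityMeasure coin := by unfold coin; infer_instance

theorem cyl_measure (μ : Measure (ℕ → Bool)) (hμ : IsFairCoin μ) (x : List Bool) :
    μ (Cyl x) = 2 ^ (-(x.length : ℤ)) := by
  have h := hμ (Finset.range x.length)
  have e : Cyl x = ((Finset.range x.length).restrict : (ℕ → Bool) → (Finset.range x.length → Bool)) ⁻¹'
      (Set.univ.pi fun i : Finset.range x.length => ({x[i.1]'(Finset.mem_range.1 i.2)} : Set Bool)) := by
    ext α
    simp only [Cyl, Set.mem_setOf_eq, Set.mem_preimage, Set.mem_univ_pi, Set.mem_singleton_iff]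
    constructor
    · intro h i; exact h ⟨i.1, Finset.mem_range.1 i.2⟩
    · intro h i; exact h ⟨i.1, by simp⟩
  rw [e, ← Measure.map_apply (by fun_prop) (MeasurableSet.univ_pi fun _ => measurableSet_singleton _)]
  erw [h]
  rw [Measure.pi_pi]
  simp [coin_singleton, ENNReal.zpow_neg, ENNReal.inv_pow]

theorem fair_ext (μ ν : Measure (ℕ → Bool)) [IsFiniteMeasure μ] 
    (h : ∀ x, μ (Cyl x) = ν (Cyl x)) : μ = ν := by
  have hnil : Cyl [] = Set.univ := by ext α; simp [Cyl]
  refine ext_of_generate_finite (Set.range Cyl) ?_ ?_ ?_ ?_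
  · apply le_antisymm
    · rw [MeasurableSpace.pi]
      refine iSup_le fun n => ?_
      rw [← measurable_iff_comap_le]
      refine @measurable_to_countable' _ _ _ _ (_) _ fun b => ?_
      have : (fun α : ℕ → Bool => α n) ⁻¹' {b} =
          ⋃ x ∈ {x : List Bool | ∃ h : n < x.length, x[n] = b}, Cyl x := by
        ext α
        simp only [Set.mem_preimage, Set.mem_singleton_iff, Set.mem_iUnion, Set.mem_setOf_eq]
        constructor
        · intro h
          exact ⟨_, ⟨by simp, by rw [List.getElem_ofFn]; exact h⟩, mem_cyl_ofFn α (n+1)⟩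
        · rintro ⟨x, ⟨h1, h2⟩, h3⟩
          rw [cyl_get h3 n h1, h2]
      rw [this]
      exact @MeasurableSet.biUnion _ _ (_) _ _ (Set.to_countable _) fun x _ =>
        MeasurableSpace.measurableSet_generateFrom ⟨x, rfl⟩
    · refine MeasurableSpace.generateFrom_le ?_
      rintro _ ⟨x, rfl⟩
      exact (cyl_open x).measurableSet
  · rintro _ ⟨x, rfl⟩ _ ⟨y, rfl⟩ ⟨α, hx, hy⟩
    rcases le_total x.length y.length with hl | hl
    · exact ⟨y, (Set.inter_eq_right.2 (cyl_prefix (cyl_compar hx hy hl))).symm⟩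
    · exact ⟨x, (Set.inter_eq_left.2 (cyl_prefix (cyl_compar hy hx hl))).symm⟩
  · rintro _ ⟨x, rfl⟩; exact h x
  · rw [← hnil]; exact h []

/-- Every exhaustive coding function with `μ (⋃_{y ∈ P x} I_y) = 2^(-|x|)` arises from a
continuous (total) tossing process `T` with `T⁻¹ I_x = ⋃_{y ∈ P x} I_y`. -/
theorem stmt12 (μ : Measure (ℕ → Bool)) (hμ : IsFairCoin μ)
    (P : List Bool → Set (List Bool))
    (hcf : IsCodingFunction P) (hex : IsExhaustiveCodingFunction P)
    (hmeas : ∀ x : List Bool, μ (⋃ y ∈ P x, Cyl y) = 2 ^ (-(x.length : ℤ))) :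
    ∃ T : (ℕ → Bool) → ℕ → Bool,
      Continuous T ∧ Measurable T ∧
      (∀ A : Set (ℕ → Bool), MeasurableSet A → μ (T ⁻¹' A) = μ A) ∧
      ∀ x : List Bool, T ⁻¹' Cyl x = ⋃ y ∈ P x, Cyl y := by
  obtain ⟨hpc, hnil, hdisj, hle⟩ := hcf
  have hQ : ∀ n : ℕ, IsPrefixCode (⋃ x ∈ {x : List Bool | x.length = n}, P x) ∧
      IsExhaustiveCode (⋃ x ∈ {x : List Bool | x.length = n}, P x) := by
    intro n
    apply hex
    · exact ⟨⟨List.replicate n true, by simp⟩, fun x hx y hy h =>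
        h.eq_of_length (hx.trans hy.symm)⟩
    · intro α
      exact ⟨_, by simp, mem_cyl_ofFn α n⟩
  have hX : ∀ α : ℕ → Bool, ∀ n : ℕ, ∃ x : List Bool, x.length = n ∧ α ∈ ⋃ y ∈ P x, Cyl y := by
    intro α n
    obtain ⟨y, hy, hα⟩ := (hQ n).2 α
    simp only [Set.mem_iUnion, Set.mem_setOf_eq] at hy
    obtain ⟨x, hx, hy⟩ := hy
    exact ⟨x, hx, Set.mem_biUnion hy hα⟩
  have huniq : ∀ (α : ℕ → Bool) (x x' : List Bool), x.length = x'.length →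
      α ∈ ⋃ y ∈ P x, Cyl y → α ∈ ⋃ y ∈ P x', Cyl y → x = x' := by
    intro α x x' hl h h'
    simp only [Set.mem_iUnion] at h h'
    obtain ⟨y, hy, hα⟩ := h
    obtain ⟨y', hy', hα'⟩ := h'
    have m : y ∈ ⋃ z ∈ {z : List Bool | z.length = x'.length}, P z := Set.mem_biUnion hl hy
    have m' : y' ∈ ⋃ z ∈ {z : List Bool | z.length = x'.length}, P z :=
      Set.mem_biUnion rfl hy'
    have hyy : y = y' := by
      rcases le_total y.length y'.length with h | h
      · exact (hQ _).1.2 _ m _ m' (cyl_compar hα hα' h)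
      · exact ((hQ _).1.2 _ m' _ m (cyl_compar hα' hα h)).symm
    subst hyy
    by_contra hne
    have := hdisj x x' (fun h => hne (h.eq_of_length hl))
      (fun h => hne (h.eq_of_length hl.symm).symm)
    exact (this ▸ (⟨hy, hy'⟩ : y ∈ P x ∩ P x') : y ∈ (∅ : Set (List Bool)))
  have hmono : ∀ x z : List Bool, x <+: z → (⋃ y ∈ P z, Cyl y) ⊆ ⋃ y ∈ P x, Cyl y := by
    intro x z h α hα
    simp only [Set.mem_iUnion] at hα ⊢
    obtain ⟨y, hy, hα⟩ := hα
    obtain ⟨w, hw, hwy⟩ := hle x z h y hy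
    exact ⟨w, hw, cyl_prefix hwy hα⟩
  choose X hXl hXm using hX
  let T : (ℕ → Bool) → ℕ → Bool := fun α n => (X α (n+1))[n]'(by simp [hXl])
  have hT1 : ∀ (α : ℕ → Bool) (x : List Bool), (α ∈ ⋃ y ∈ P x, Cyl y) → T α ∈ Cyl x := by
    intro α x hα i
    have e : X α (i.1+1) = x.take (i.1+1) := by
      apply huniq α _ _ _ (hXm _ _) (hmono _ _ (List.take_prefix _ _) hα)
      rw [hXl, List.length_take]
      have := i.2
      omega
    simp [T, e]
  have hT : ∀ x : List Bool, T ⁻¹' Cyl x = ⋃ y ∈ P x, Cyl y := by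
    intro x
    refine Set.Subset.antisymm ?_ (fun α hα => hT1 α x hα)
    intro α hα
    have h2 := hT1 α _ (hXm α x.length)
    have e : x = X α x.length :=
      (cyl_compar hα h2 (hXl _ _).ge).eq_of_length (hXl _ _).symm
    have h3 := hXm α x.length
    rwa [← e] at h3
  have hopen : ∀ x : List Bool, IsOpen (⋃ y ∈ P x, Cyl y) := fun x =>
    isOpen_biUnion fun y _ => cyl_open y
  have hcont : Continuous T := by
    refine continuous_pi fun n => ?_
    refine IsLocallyConstant.continuous ?_
    rw [IsLocallyConstant.iff_exists_open]
    intro α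
    refine ⟨_, hopen (X α (n+1)), hXm _ _, fun β hβ => ?_⟩
    have hn : n < (X α (n+1)).length := by simp [hXl]
    rw [cyl_get (hT1 β _ hβ) n hn]
  refine ⟨T, hcont, hcont.measurable, ?_, hT⟩
  have hfin : IsFiniteMeasure μ := ⟨by
    have := hmeas []
    simp only [hnil, Set.mem_singleton_iff, Set.iUnion_iUnion_eq_left] at this
    have hn : Cyl [] = Set.univ := by ext α; simp [Cyl]
    rw [hn] at this
    rw [this]; simp⟩
  have hmap : μ.map T = μ := by
    have : IsFiniteMeasure (μ.map T) := inferInstance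
    refine fair_ext _ _ fun x => ?_
    rw [Measure.map_apply hcont.measurable (cyl_open x).measurableSet, hT, hmeas,
      cyl_measure μ hμ]
  intro A hA
  rw [← Measure.map_apply hcont.measurable hA, hmap]
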